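/- Let r ≥ 1 and let m_1, …, m_r and d_1, …, d_r be integers forming monic data, and let G be the group with presentation ⟨x, t | w⟩ where w = ∏_{i=1}^{r} t^{-d_i} x^{m_i} t^{d_i} in the free group on x, t. If every complex root of the polynomial A(X) = Σ_{i=1}^{r} m_i X^{d_i − e} ∈ ℤ[X], where e = min_{1≤i≤r} d_i, is a positive real number, then G is bi-orderable. -/

import Mathlib

/-- A group is bi-orderable if it admits a strict total order invariant under
left and right multiplication. -/
def IsBiOrderable (G : Type*) [Group G] : Prop :=
  ∃ lt : G → G → Prop, IsStrictTotalOrder G lt ∧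
    ∀ a b c : G, lt a b → lt (c * a) (c * b) ∧ lt (a * c) (b * c)
open Polynomial

section Triangular

variable {ι : Type*} (wt : ι → ℕ)

/-- The operators on finitely supported functions that lower the weight filtration
by at least `n`. -/
def lowering (n : ℕ) : Submodule ℝ (Module.End ℝ (ι →₀ ℝ)) where
  carrier := {D | ∀ B m, (∀ w, B ≤ wt w → m w = 0) → ∀ v, B ≤ wt v + n → D m v = 0}
  add_mem' := by
    intro D D' h h' B m hm v hv
    simp [h B m hm v hv, h' B m hm v hv]
  zero_mem' := by
    intro B m _ v _
    simp
  smul_mem' := by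
    intro c D h B m hm v hv
    simp [h B m hm v hv]

theorem lowering_anti {a b : ℕ} (h : a ≤ b) : lowering wt b ≤ lowering wt a :=
  fun _ hD B m hm v hv => hD B m hm v (hv.trans (by omega))

theorem mul_mem_lowering {a b : ℕ} {D D' : Module.End ℝ (ι →₀ ℝ)} (h : D ∈ lowering wt a)
    (h' : D' ∈ lowering wt b) : D * D' ∈ lowering wt (a + b) := by
  intro B m hm v hv
  exact h (B - b) (D' m) (fun w hw => h' B m hm w (by omega)) v (by omega)

/-- `g` preserves the weight filtration and acts on its associated graded space diagonally,
with coefficients `c`. -/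
def IsTriangular (c : ι → ℝ) (g : Module.End ℝ (ι →₀ ℝ)) : Prop :=
  ∀ v m, (∀ w, wt v < wt w → m w = 0) → g m v = c v * m v

variable {wt}

theorem IsTriangular.one : IsTriangular wt (fun _ => 1) (1 : Module.End ℝ (ι →₀ ℝ)) := by
  intro v m _
  simp

theorem IsTriangular.mul {c c' : ι → ℝ} {g g' : Module.End ℝ (ι →₀ ℝ)}
    (h : IsTriangular wt c g) (h' : IsTriangular wt c' g') :
    IsTriangular wt (fun v => c v * c' v) (g * g') := by
  intro v m hm
  have h1 : ∀ w, wt v ≤ wt w → g' m w = c' w * m w := fun w hw =>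
    h' w m fun u hu => hm u (hw.trans_lt hu)
  change g (g' m) v = _
  rw [h v (g' m) fun w hw => by rw [h1 w hw.le, hm w hw, mul_zero], h1 v le_rfl]
  ring

theorem IsTriangular.mem_lowering {c : ι → ℝ} {g : Module.End ℝ (ι →₀ ℝ)}
    (h : IsTriangular wt c g) : g ∈ lowering wt 0 := by
  intro B m hm v hv
  rw [h v m fun w hw => hm w (by omega), hm v hv, mul_zero]

theorem isTriangular_of_sub_one_mem {g : Module.End ℝ (ι →₀ ℝ)} (h : g - 1 ∈ lowering wt 1) :
    IsTriangular wt (fun _ => 1) g := by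
  intro v m hm
  have := h (wt v + 1) m (fun w hw => hm w hw) v le_rfl
  simp only [LinearMap.sub_apply, Module.End.one_apply, Finsupp.sub_apply] at this
  linarith

theorem IsTriangular.vanish_of_apply {c : ι → ℝ} (hc : ∀ v, 0 < c v)
    {g : Module.End ℝ (ι →₀ ℝ)} (h : IsTriangular wt c g) {B : ℕ} {m : ι →₀ ℝ}
    (hm : ∀ w, B ≤ wt w → g m w = 0) : ∀ w, B ≤ wt w → m w = 0 := by
  by_contra! hne
  obtain ⟨w, hw, hmw⟩ := hne
  obtain ⟨u, hu, hmax⟩ := m.support.exists_max_image wt ⟨w, by simpa using hmw⟩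
  have hBu : B ≤ wt u := hw.trans (hmax w (by simpa using hmw))
  have := h u m fun v hv => by
    by_contra hne
    exact absurd (hmax v (by simpa using hne)) (by omega)
  rw [hm u hBu] at this
  exact (mul_ne_zero (hc u).ne' (by simpa using hu)) this.symm

theorem exists_weight_bound (m : ι →₀ ℝ) : ∃ B, ∀ w, B ≤ wt w → m w = 0 := by
  refine ⟨m.support.sup wt + 1, fun w hw => ?_⟩
  by_contra hne
  have : wt w ≤ m.support.sup wt := Finset.le_sup (by simpa using hne)
  omega

theorem IsTriangular.bijective {c : ι → ℝ} (hc : ∀ v, 0 < c v)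
    {g : Module.End ℝ (ι →₀ ℝ)} (h : IsTriangular wt c g) : Function.Bijective g := by
  constructor
  · rw [injective_iff_map_eq_zero]
    intro m hm
    ext w
    exact h.vanish_of_apply hc (B := 0) (fun w _ => by simp [hm]) w (Nat.zero_le _)
  · intro m
    obtain ⟨B, hB⟩ := exists_weight_bound (wt := wt) m
    induction B generalizing m with
    | zero => exact ⟨0, by ext w; simp [hB w (Nat.zero_le _)]⟩
    | succ B ih =>
      let n : ι →₀ ℝ := Finsupp.onFinset m.support (fun w => (c w)⁻¹ * m w) (by
        intro w hw
        simpa using right_ne_zero_of_mul hw)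
      have hn : ∀ w, n w = (c w)⁻¹ * m w := fun w => rfl
      obtain ⟨k, hk⟩ := ih (m - g n) (by
        intro v hv
        rw [Finsupp.sub_apply, h v n fun w hw => by rw [hn, hB w (by omega), mul_zero], hn,
          mul_inv_cancel_left₀ (hc v).ne', sub_self])
      exact ⟨k + n, by rw [map_add, hk, sub_add_cancel]⟩

variable (wt)

/-- The invertible operators acting on the graded space of the weight filtration diagonally with
positive coefficients. -/
def triangularGroup : Subgroup (Module.End ℝ (ι →₀ ℝ))ˣ where
  carrier := {g | ∃ c : ι → ℝ, (∀ v, 0 < c v) ∧ IsTriangular wt c g}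
  mul_mem' := by
    rintro g g' ⟨c, hc, h⟩ ⟨c', hc', h'⟩
    exact ⟨_, fun v => mul_pos (hc v) (hc' v), h.mul h'⟩
  one_mem' := ⟨_, fun _ => one_pos, IsTriangular.one⟩
  inv_mem' := by
    rintro g ⟨c, hc, h⟩
    refine ⟨fun v => (c v)⁻¹, fun v => inv_pos.2 (hc v), fun v m hm => ?_⟩
    have hg : (g : Module.End ℝ (ι →₀ ℝ)) ((↑g⁻¹ : Module.End ℝ (ι →₀ ℝ)) m) = m := by
      rw [← Module.End.mul_apply, Units.mul_inv, Module.End.one_apply]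
    have h1 := h v _ (h.vanish_of_apply hc (B := wt v + 1)
      (m := (↑g⁻¹ : Module.End ℝ (ι →₀ ℝ)) m) (by rw [hg]; exact hm))
    rw [hg] at h1
    rw [h1, inv_mul_cancel_left₀ (hc v).ne']

variable {wt}

theorem IsTriangular.exists_unit {c : ι → ℝ} (hc : ∀ v, 0 < c v)
    {g : Module.End ℝ (ι →₀ ℝ)} (h : IsTriangular wt c g) :
    ∃ u ∈ triangularGroup wt, (u : Module.End ℝ (ι →₀ ℝ)) = g := by
  obtain ⟨u, rfl⟩ := (Module.End.isUnit_iff g).2 (h.bijective hc)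
  exact ⟨u, ⟨c, hc, h⟩, rfl⟩

/-- A group of positive triangular operators is bi-ordered by the lexicographic order on
matrix entries, entries closer to the diagonal coming first. -/
theorem isBiOrderable_of_triangular [Countable ι] {G : Type*} [Group G]
    (ρ : G →* (Module.End ℝ (ι →₀ ℝ))ˣ) (hinj : Function.Injective ρ)
    (htri : ∀ g, ρ g ∈ triangularGroup wt) : IsBiOrderable G := by
  classical
  obtain ⟨num, hnum⟩ := exists_injective_nat (ι × ι)
  let key : ι × ι → ℕ ×ₗ ℕ := fun p => toLex (wt p.2 - wt p.1, num p)
  have hkey : Function.Injective key := fun p q hpq => hnum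
    (congrArg (fun z => (ofLex z).2) hpq)
  have key_lt : ∀ p q : ι × ι, wt p.2 - wt p.1 < wt q.2 - wt q.1 → key p < key q :=
    fun p q h => Prod.Lex.toLex_lt_toLex.2 (Or.inl h)
  let A : G → ι × ι → ℝ := fun g p => (ρ g : Module.End ℝ (ι →₀ ℝ)) (Finsupp.single p.2 1) p.1
  have hA0 : ∀ g v w, v ≠ w → wt w ≤ wt v → A g (v, w) = 0 := by
    intro g v w hne hvw
    obtain ⟨c, _, h⟩ := htri g
    have := h v (Finsupp.single w 1) fun u hu => by
      rw [Finsupp.single_apply, if_neg]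
      rintro rfl
      omega
    rw [Finsupp.single_eq_of_ne hne, mul_zero] at this
    exact this
  have hAinj : ∀ a b, (∀ p, A a p = A b p) → a = b := by
    intro a b h
    refine hinj (Units.ext (Finsupp.lhom_ext' fun w => ?_))
    ext v
    simpa [A] using h (v, w)
  have left : ∀ a b c p, (∀ q, key q < key p → A a q = A b q) →
      ∃ r > 0, A (c * b) p - A (c * a) p = r * (A b p - A a p) := by
    rintro a b c ⟨v, w⟩ h
    obtain ⟨d, hd, hc⟩ := htri c
    refine ⟨d v, hd v, ?_⟩
    have := hc v ((ρ b : Module.End ℝ (ι →₀ ℝ)) (Finsupp.single w 1) -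
        (ρ a : Module.End ℝ (ι →₀ ℝ)) (Finsupp.single w 1)) fun u hu => by
      rw [Finsupp.sub_apply, sub_eq_zero]
      change A b (u, w) = A a (u, w)
      by_cases huw : wt w ≤ wt u ∧ u ≠ w
      · rw [hA0 _ _ _ huw.2 huw.1, hA0 _ _ _ huw.2 huw.1]
      · refine (h (u, w) (key_lt _ _ ?_)).symm
        by_cases hu' : u = w
        · subst hu'; simp only; omega
        · have : ¬ wt w ≤ wt u := fun h => huw ⟨h, hu'⟩
          simp only; omega
    simpa [A, map_sub] using this
  have right : ∀ a b c p, (∀ q, key q < key p → A a q = A b q) →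
      ∃ r > 0, A (b * c) p - A (a * c) p = r * (A b p - A a p) := by
    rintro a b c ⟨v, w⟩ h
    obtain ⟨d, hd, hc⟩ := htri c
    refine ⟨d w, hd w, ?_⟩
    set D : Module.End ℝ (ι →₀ ℝ) := (ρ b : Module.End ℝ (ι →₀ ℝ)) - ρ a with hD
    have hlow : ∀ u, wt u < wt w → D (Finsupp.single u 1) v = 0 := by
      intro u hu
      rw [hD, LinearMap.sub_apply, Finsupp.sub_apply, sub_eq_zero]
      change A b (v, u) = A a (v, u)
      by_cases hvu : wt u ≤ wt v ∧ v ≠ u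
      · rw [hA0 _ _ _ hvu.2 hvu.1, hA0 _ _ _ hvu.2 hvu.1]
      · refine (h (v, u) (key_lt _ _ ?_)).symm
        by_cases hv' : v = u
        · subst hv'; simp only; omega
        · have : ¬ wt u ≤ wt v := fun h => hvu ⟨h, hv'⟩
          simp only; omega
    set n : ι →₀ ℝ := (ρ c : Module.End ℝ (ι →₀ ℝ)) (Finsupp.single w 1) -
      d w • Finsupp.single w 1 with hn
    have hn0 : ∀ u, wt w ≤ wt u → n u = 0 := by
      intro u hu
      have := hc u (Finsupp.single w 1) fun x hx => by
        rw [Finsupp.single_apply, if_neg]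
        rintro rfl
        omega
      rw [hn, Finsupp.sub_apply, this]
      by_cases huw : u = w
      · subst huw; simp
      · simp [Finsupp.single_eq_of_ne huw]
    have hDn : D n v = 0 := by
      conv_lhs => rw [← Finsupp.sum_single n]
      rw [Finsupp.sum, map_sum, Finsupp.finsetSum_apply]
      refine Finset.sum_eq_zero fun u hu => ?_
      have hlt : wt u < wt w := by
        by_contra hge
        exact (Finsupp.mem_support_iff.1 hu) (hn0 u (by omega))
      rw [← mul_one (n u), ← smul_eq_mul, ← Finsupp.smul_single, map_smul, Finsupp.smul_apply,
        hlow u hlt, smul_zero]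
    have hsplit : (ρ c : Module.End ℝ (ι →₀ ℝ)) (Finsupp.single w 1) =
      n + d w • Finsupp.single w 1 := by rw [hn, sub_add_cancel]
    have : A (b * c) (v, w) - A (a * c) (v, w) =
        D ((ρ c : Module.End ℝ (ι →₀ ℝ)) (Finsupp.single w 1)) v := by
      simp [A, hD]
    rw [this, hsplit, map_add, Finsupp.add_apply, hDn, zero_add, map_smul, Finsupp.smul_apply,
      smul_eq_mul]
    simp [A, hD]
  let lt : G → G → Prop := fun a b => ∃ p, A a p < A b p ∧ ∀ q, key q < key p → A a q = A b q
  have hirr : ∀ a, ¬ lt a a := fun a ⟨p, hp, _⟩ => lt_irrefl _ hp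
  have htrans : ∀ a b c, lt a b → lt b c → lt a c := by
    rintro a b c ⟨p, hp, hp'⟩ ⟨q, hq, hq'⟩
    rcases lt_trichotomy (key p) (key q) with h | h | h
    · exact ⟨p, (hq' p h) ▸ hp, fun r hr => (hp' r hr).trans (hq' r (hr.trans h))⟩
    · obtain rfl := hkey h
      exact ⟨p, hp.trans hq, fun r hr => (hp' r hr).trans (hq' r hr)⟩
    · exact ⟨q, (hp' q h).symm ▸ hq, fun r hr => (hp' r (hr.trans h)).trans (hq' r hr)⟩
  have htot : ∀ a b, a ≠ b → lt a b ∨ lt b a := by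
    intro a b hab
    have hne : {p | A a p ≠ A b p}.Nonempty := by
      by_contra hempty
      rw [Set.not_nonempty_iff_eq_empty, Set.eq_empty_iff_forall_notMem] at hempty
      exact hab (hAinj a b fun p => by simpa using hempty p)
    obtain ⟨p, hp, hmin⟩ := (InvImage.wf key wellFounded_lt).has_min _ hne
    have hmin' : ∀ q, key q < key p → A a q = A b q := fun q hq => by
      by_contra hne
      exact hmin q hne hq
    rcases lt_or_gt_of_ne hp with h | h
    · exact Or.inl ⟨p, h, hmin'⟩
    · exact Or.inr ⟨p, h, fun q hq => (hmin' q hq).symm⟩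
  refine ⟨lt, { trichotomous := ?_, irrefl := hirr, trans := htrans }, ?_⟩
  · intro a b h1 h2
    by_contra hne
    exact (htot a b hne).elim h1 h2
  · rintro a b c ⟨p, hp, hp'⟩
    have key_eq : ∀ (f : G → G), (∀ p, (∀ q, key q < key p → A a q = A b q) →
        ∃ r > 0, A (f b) p - A (f a) p = r * (A b p - A a p)) → lt (f a) (f b) := by
      intro f hf
      refine ⟨p, ?_, fun q hq => ?_⟩
      · obtain ⟨r, hr, h⟩ := hf p hp'
        have := mul_pos hr (sub_pos.2 hp)
        linarith
      · obtain ⟨r, -, h⟩ := hf q fun q' hq' => hp' q' (hq'.trans hq)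
        rw [hp' q hq, sub_self, mul_zero] at h
        linarith
    exact ⟨key_eq (c * ·) (left a b c), key_eq (· * c) (right a b c)⟩

end Triangular

section Words

variable {α : Type*}

/-- The operator on functions on words given by left division by the letter `i`. -/
noncomputable def strip (i : α) : Module.End ℝ (List α →₀ ℝ) :=
  Finsupp.lcomapDomain (List.cons i) List.cons_injective

@[simp]
theorem strip_apply (i : α) (m : List α →₀ ℝ) (w : List α) : strip i m w = m (i :: w) :=
  Finsupp.comapDomain_apply _ _ _ _

theorem strip_single_cons_self (i : α) (v : List α) :
    strip i (Finsupp.single (i :: v) 1) = Finsupp.single v 1 := by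
  classical
  ext w
  simp [Finsupp.single_apply]

theorem strip_single_eq_zero {i : α} {v : List α} (h : i ∉ v.head?) :
    strip i (Finsupp.single v 1) = 0 := by
  classical
  ext w
  rw [strip_apply, Finsupp.single_apply, if_neg, Finsupp.zero_apply]
  rintro rfl
  simp at h

theorem strip_mem_lowering (wt : List α → ℕ) (i : α) (n : ℕ) (h : ∀ w, wt (i :: w) = wt w + n) :
    strip i ∈ lowering wt n := by
  intro B m hm v hv
  rw [strip_apply]
  exact hm _ (by rw [h]; exact hv)

/-- The product of the operators `Z i` over the letters of a word, in reverse order. -/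
noncomputable def wordOperator (Z : α → Module.End ℝ (List α →₀ ℝ)) :
    List α → Module.End ℝ (List α →₀ ℝ)
  | [] => 1
  | i :: w => wordOperator Z w * Z i

theorem wordOperator_mem_lowering {wt : List α → ℕ} {Z : α → Module.End ℝ (List α →₀ ℝ)}
    (hZ : ∀ i, Z i ∈ lowering wt 1) (w : List α) :
    wordOperator Z w ∈ lowering wt w.length := by
  induction w with
  | nil => exact IsTriangular.one.mem_lowering
  | cons i w ih => exact mul_mem_lowering _ ih (hZ i)

/-- Every tuple of locally nilpotent operators is intertwined with the tuple of operators
`strip`. -/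
theorem exists_intertwiner [Finite α] {wt : List α → ℕ} {Z : α → Module.End ℝ (List α →₀ ℝ)}
    (hZ : ∀ i, Z i ∈ lowering wt 1) :
    ∃ S : Module.End ℝ (List α →₀ ℝ), ∀ m w, S m w = wordOperator Z w m [] := by
  have hfin : ∀ m, (Function.support fun w => wordOperator Z w m []).Finite := by
    intro m
    obtain ⟨B, hB⟩ := exists_weight_bound (wt := wt) m
    refine (List.finite_length_lt α B).subset fun w hw => ?_
    by_contra hge
    exact hw (wordOperator_mem_lowering hZ w B m hB [] (le_add_left (not_lt.1 hge)))
  exact ⟨{ toFun := fun m => Finsupp.ofSupportFinite _ (hfin m)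
           map_add' := fun m m' => by
            ext w
            simp [Finsupp.ofSupportFinite_coe]
           map_smul' := fun c m => by
            ext w
            simp [Finsupp.ofSupportFinite_coe] }, fun m w => rfl⟩

theorem strip_mul_intertwiner {Z : α → Module.End ℝ (List α →₀ ℝ)}
    {S : Module.End ℝ (List α →₀ ℝ)} (hS : ∀ m w, S m w = wordOperator Z w m []) (i : α) :
    strip i * S = S * Z i := by
  ext1 w
  ext v
  simp [hS, wordOperator]

theorem zpow_apply_of_sq_zero {M : Type*} [AddCommGroup M] [Module ℝ M]
    {u : (Module.End ℝ M)ˣ} {N : Module.End ℝ M}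
    (hu : (u : Module.End ℝ M) = 1 + N) {m : M} (hm : N (N m) = 0) (e : ℤ) :
    ((u ^ e : (Module.End ℝ M)ˣ) : Module.End ℝ M) m = m + (e : ℝ) • N m := by
  have h1 : (u : Module.End ℝ M) m = m + N m := by simp [hu]
  have h2 : (u : Module.End ℝ M) (N m) = N m := by simp [hu, hm]
  have inv_apply : ∀ x y : M, (u : Module.End ℝ M) x = y →
      ((u⁻¹ : (Module.End ℝ M)ˣ) : Module.End ℝ M) y = x := by
    rintro x _ rfl
    rw [← Module.End.mul_apply, Units.inv_mul, Module.End.one_apply]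
  have h3 : ∀ e : ℤ, ((u ^ e : (Module.End ℝ M)ˣ) : Module.End ℝ M) (N m) = N m := by
    intro e
    induction e with
    | zero => simp
    | succ n ih => rw [zpow_add_one, Units.val_mul, Module.End.mul_apply, h2, ih]
    | pred n ih => rw [zpow_sub_one, Units.val_mul, Module.End.mul_apply, inv_apply _ _ h2, ih]
  induction e with
  | zero => simp
  | succ n ih =>
    rw [zpow_add_one, Units.val_mul, Module.End.mul_apply, h1, map_add, ih, h3]
    push_cast
    module
  | pred n ih =>
    rw [zpow_sub_one, Units.val_mul, Module.End.mul_apply,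
      inv_apply (m - N m) m (by rw [map_sub, h1, h2, add_sub_cancel_right]), map_sub, ih, h3]
    push_cast
    module

theorem exists_syllables {f : FreeGroup α} (hf : f ≠ 1) :
    ∃ l : List (α × ℤ), l ≠ [] ∧ (∀ p ∈ l, p.2 ≠ 0) ∧ (l.map Prod.fst).IsChain (· ≠ ·) ∧
      f = (l.map fun p => FreeGroup.of p.1 ^ p.2).prod := by
  classical
  let x := freeGroupEquivCoprodI f
  let w := Monoid.CoprodI.Word.equiv x
  have hw : w.prod = x := Monoid.CoprodI.Word.equiv.symm_apply_apply x
  refine ⟨w.toList.map fun s => (s.1, FreeGroup.freeGroupUnitEquivInt s.2), ?_, ?_, ?_, ?_⟩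
  · intro h
    refine hf ((map_eq_one_iff freeGroupEquivCoprodI (MulEquiv.injective _)).1 ?_)
    rw [List.map_eq_nil_iff] at h
    change x = 1
    rw [← hw, Monoid.CoprodI.Word.prod, h]
    rfl
  · intro p hp
    obtain ⟨s, hs, rfl⟩ := List.mem_map.1 hp
    intro h
    refine w.ne_one s hs (FreeGroup.freeGroupUnitEquivInt.injective (h.trans ?_))
    rfl
  · rw [List.map_map, List.isChain_map]
    exact w.chain_ne
  · have : f = freeGroupEquivCoprodI.symm x := (MulEquiv.symm_apply_apply _ _).symm
    rw [this, ← hw, Monoid.CoprodI.Word.prod, map_list_prod, List.map_map, List.map_map]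
    congr 1
    refine List.map_congr_left fun s _ => ?_
    have hs : s.2 = FreeGroup.of () ^ FreeGroup.freeGroupUnitEquivInt s.2 :=
      (FreeGroup.freeGroupUnitEquivInt.symm_apply_apply s.2).symm
    simp only [Function.comp_apply]
    conv_lhs => rw [hs]
    simp [freeGroupEquivCoprodI]

variable {u : α → (Module.End ℝ (List α →₀ ℝ))ˣ}

theorem zpow_apply_single_self (hu : ∀ i, (u i : Module.End ℝ (List α →₀ ℝ)) = 1 + strip i)
    {i : α} {v : List α} (hv : i ∉ v.head?) (e : ℤ) :
    ((u i ^ e : (Module.End ℝ (List α →₀ ℝ))ˣ) : Module.End ℝ (List α →₀ ℝ))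
      (Finsupp.single (i :: v) 1) = Finsupp.single (i :: v) 1 + (e : ℝ) • Finsupp.single v 1 := by
  rw [zpow_apply_of_sq_zero (hu i)] <;> rw [strip_single_cons_self]
  exact strip_single_eq_zero hv

theorem zpow_apply_single_of_ne (hu : ∀ i, (u i : Module.End ℝ (List α →₀ ℝ)) = 1 + strip i)
    {i : α} {v : List α} (hv : i ∉ v.head?) (e : ℤ) :
    ((u i ^ e : (Module.End ℝ (List α →₀ ℝ))ˣ) : Module.End ℝ (List α →₀ ℝ))
      (Finsupp.single v 1) = Finsupp.single v 1 := by
  rw [zpow_apply_of_sq_zero (hu i)] <;> rw [strip_single_eq_zero hv] <;> simp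

theorem syllables_apply_eq_zero
    (hu : ∀ i, (u i : Module.End ℝ (List α →₀ ℝ)) = 1 + strip i) (l : List (α × ℤ)) :
    ∀ v : List α, v.IsChain (· ≠ ·) → l.length < v.length →
      (((l.map fun p => u p.1 ^ p.2).prod : (Module.End ℝ (List α →₀ ℝ))ˣ) :
        Module.End ℝ (List α →₀ ℝ)) (Finsupp.single v 1) [] = 0 := by
  induction l using List.reverseRecOn with
  | nil =>
    intro v _ hlen
    have : v ≠ [] := by rintro rfl; simp at hlen
    simp [Finsupp.single_eq_of_ne this.symm]
  | append_singleton l p ih =>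
    intro v hv hlen
    rw [List.length_append, List.length_singleton] at hlen
    rw [List.map_append, List.prod_append, List.map_singleton, List.prod_singleton, Units.val_mul,
      Module.End.mul_apply]
    by_cases hp : p.1 ∈ v.head?
    · cases v with
      | nil => simp at hp
      | cons j v =>
        obtain rfl : j = p.1 := by simpa using hp
        rw [List.isChain_cons] at hv
        rw [zpow_apply_single_self hu fun h => hv.1 _ h rfl, map_add, map_smul,
          Finsupp.add_apply, Finsupp.smul_apply, ih _ (List.isChain_cons.2 hv) (by omega),
          ih _ hv.2 (by simpa using hlen), smul_zero, add_zero]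
    · rw [zpow_apply_single_of_ne hu hp]
      exact ih v hv (by omega)

theorem syllables_apply_reverse
    (hu : ∀ i, (u i : Module.End ℝ (List α →₀ ℝ)) = 1 + strip i) (l : List (α × ℤ))
    (hl : (l.map Prod.fst).IsChain (· ≠ ·)) :
    (((l.map fun p => u p.1 ^ p.2).prod : (Module.End ℝ (List α →₀ ℝ))ˣ) :
      Module.End ℝ (List α →₀ ℝ)) (Finsupp.single (l.map Prod.fst).reverse 1) [] =
        ((l.map Prod.snd).prod : ℤ) := by
  induction l using List.reverseRecOn with
  | nil => simp
  | append_singleton l p ih =>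
    have hrev : ((l ++ [p]).map Prod.fst).reverse = p.1 :: (l.map Prod.fst).reverse := by simp
    have hchain : (p.1 :: (l.map Prod.fst).reverse).IsChain (· ≠ ·) := by
      rw [← hrev, List.isChain_reverse]
      exact hl.imp fun _ _ h => h.symm
    rw [hrev]
    rw [List.map_append, List.isChain_append] at hl
    rw [List.map_append, List.prod_append, List.map_singleton, List.prod_singleton, Units.val_mul,
      Module.End.mul_apply,
      zpow_apply_single_self hu fun h => (List.isChain_cons.1 hchain).1 _ h rfl, map_add, map_smul,
      Finsupp.add_apply, Finsupp.smul_apply, ih hl.1,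
      syllables_apply_eq_zero hu _ _ hchain (by simp)]
    simp [mul_comm]

/-- The Magnus representation detects nontrivial elements of the free group. -/
theorem exists_lift_apply_ne
    (hu : ∀ i, (u i : Module.End ℝ (List α →₀ ℝ)) = 1 + strip i) {f : FreeGroup α} (hf : f ≠ 1) :
    ∃ m, (FreeGroup.lift u f : Module.End ℝ (List α →₀ ℝ)) m [] ≠ m [] := by
  obtain ⟨l, hl, hl0, hchain, rfl⟩ := exists_syllables hf
  refine ⟨Finsupp.single (l.map Prod.fst).reverse 1, ?_⟩
  have hprod : FreeGroup.lift u (l.map fun p => FreeGroup.of p.1 ^ p.2).prod =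
      (l.map fun p => u p.1 ^ p.2).prod := by
    rw [map_list_prod, List.map_map]
    congr 1
    exact List.map_congr_left fun p _ => by simp
  rw [hprod, syllables_apply_reverse hu l hchain, Finsupp.single_eq_of_ne (by simpa using hl.symm)]
  simp only [ne_eq, Int.cast_eq_zero, List.prod_eq_zero_iff, List.mem_map, not_exists, not_and]
  exact fun p hp => hl0 p hp

end Words

section Newton

variable (a : ℕ → ℝ)

/-- The Newton basis polynomials with nodes `a`. -/
noncomputable def newtonPoly (i : ℕ) : ℝ[X] :=
  ∏ l ∈ Finset.range i, (X - C (a l))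

/-- Multiplication by `X` in coordinates with respect to the Newton basis. -/
def newtonShift : Module.End ℝ (ℕ → ℝ) where
  toFun c i := a i * c i + if i = 0 then 0 else c (i - 1)
  map_add' c c' := by
    ext i
    by_cases hi : i = 0 <;> simp [hi] <;> ring
  map_smul' r c := by
    ext i
    by_cases hi : i = 0 <;> simp [hi] <;> ring

theorem newtonShift_apply_zero (c : ℕ → ℝ) : newtonShift a c 0 = a 0 * c 0 := by
  simp [newtonShift]

theorem newtonShift_apply_succ (c : ℕ → ℝ) (i : ℕ) :
    newtonShift a c (i + 1) = a (i + 1) * c (i + 1) + c i := by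
  simp [newtonShift]

/-- The Newton coordinates of `X ^ j`. -/
noncomputable def newtonCoord (j : ℕ) : ℕ → ℝ :=
  (newtonShift a ^ j) (Pi.single 0 1)

theorem newtonCoord_zero : newtonCoord a 0 = Pi.single 0 1 := rfl

theorem newtonCoord_succ (j : ℕ) : newtonCoord a (j + 1) = newtonShift a (newtonCoord a j) := by
  rw [newtonCoord, pow_succ', Module.End.mul_apply, newtonCoord]

theorem aeval_newtonPoly (i : ℕ) :
    aeval (newtonShift a) (newtonPoly a i) (Pi.single 0 1) = Pi.single i 1 := by
  induction i with
  | zero => simp [newtonPoly]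
  | succ i ih =>
    rw [newtonPoly, Finset.prod_range_succ, mul_comm, map_mul, Module.End.mul_apply,
      ← newtonPoly, ih]
    ext l
    cases l with
    | zero =>
      rcases i with _ | i
      · simp [newtonShift_apply_zero, Module.algebraMap_end_apply]
      · simp [newtonShift_apply_zero, Module.algebraMap_end_apply]
    | succ l =>
      by_cases h : l + 1 = i
      · subst h
        simp [newtonShift_apply_succ, Module.algebraMap_end_apply]
      · by_cases h' : l = i
        · subst h'
          simp [newtonShift_apply_succ, Module.algebraMap_end_apply]
        · simp [newtonShift_apply_succ, Module.algebraMap_end_apply, h, h']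

theorem newtonCoord_of_lt {i j : ℕ} (h : j < i) : newtonCoord a j i = 0 := by
  induction j generalizing i with
  | zero => simp [newtonCoord_zero, h.ne']
  | succ j ih =>
    obtain ⟨i, rfl⟩ : ∃ l, i = l + 1 := ⟨i - 1, by omega⟩
    rw [newtonCoord_succ, newtonShift_apply_succ, ih (by omega), ih (by omega)]
    simp

theorem newtonCoord_self (j : ℕ) : newtonCoord a j j = 1 := by
  induction j with
  | zero => simp [newtonCoord_zero]
  | succ j ih =>
    rw [newtonCoord_succ, newtonShift_apply_succ, newtonCoord_of_lt a (Nat.lt_succ_self j), ih]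
    simp

theorem sum_newtonCoord_smul {j k : ℕ} (h : j < k) :
    ∑ i ∈ Finset.range k, newtonCoord a j i • newtonPoly a i = X ^ j := by
  induction j with
  | zero =>
    rw [Finset.sum_eq_single_of_mem 0 (by simpa using h)]
    · simp [newtonCoord_zero, newtonPoly]
    · intro i _ hi
      simp [newtonCoord_zero, hi]
  | succ j ih =>
    obtain ⟨k, rfl⟩ : ∃ l, k = l + 1 := ⟨k - 1, by omega⟩
    have h1 : ∑ i ∈ Finset.range (k + 1), newtonCoord a j i • newtonPoly a (i + 1) =
        ∑ i ∈ Finset.range k, newtonCoord a j i • newtonPoly a (i + 1) := by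
      rw [Finset.sum_range_succ, newtonCoord_of_lt a (by omega), zero_smul, add_zero]
    have h2 : ∀ i, newtonPoly a (i + 1) = X * newtonPoly a i - a i • newtonPoly a i := by
      intro i
      rw [newtonPoly, Finset.prod_range_succ, ← newtonPoly, smul_eq_C_mul]
      ring
    have h3 : ∑ i ∈ Finset.range (k + 1), newtonCoord a (j + 1) i • newtonPoly a i =
        ∑ i ∈ Finset.range (k + 1), (a i * newtonCoord a j i) • newtonPoly a i +
          ∑ i ∈ Finset.range k, newtonCoord a j i • newtonPoly a (i + 1) := by
      rw [Finset.sum_range_succ', Finset.sum_range_succ' _ k, add_right_comm,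
        ← Finset.sum_add_distrib, newtonCoord_succ, newtonShift_apply_zero]
      congr 1
      refine Finset.sum_congr rfl fun i _ => ?_
      rw [newtonShift_apply_succ, add_smul]
    rw [h3, ← h1, ← Finset.sum_add_distrib, pow_succ', ← ih (by omega), Finset.mul_sum]
    refine Finset.sum_congr rfl fun i _ => ?_
    rw [h2, mul_comm (a i), mul_smul, ← smul_add, add_sub_cancel, mul_smul_comm]

end Newton

section Representation

variable {k : ℕ}

/-- The weight of a word, in which the letter `i` has weight `k + i`. -/
def letterWeight (k : ℕ) (w : List (Fin k)) : ℕ :=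
  (w.map fun i => k + (i : ℕ)).sum

theorem letterWeight_cons (i : Fin k) (w : List (Fin k)) :
    letterWeight k (i :: w) = letterWeight k w + (k + i) := by
  simp [letterWeight, add_comm]

theorem strip_mem_lowering_letterWeight (i : Fin k) :
    strip i ∈ lowering (letterWeight k) (k + i) :=
  strip_mem_lowering _ i _ fun w => letterWeight_cons i w

/-- The linear form in the operators `strip` with coefficients `c`. -/
noncomputable def linForm (k : ℕ) : (ℕ → ℝ) →ₗ[ℝ] Module.End ℝ (List (Fin k) →₀ ℝ) where
  toFun c := ∑ i : Fin k, c i • strip i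
  map_add' c c' := by simp [add_smul, Finset.sum_add_distrib]
  map_smul' r c := by simp [mul_smul, Finset.smul_sum]

theorem linForm_apply (c : ℕ → ℝ) : linForm k c = ∑ i : Fin k, c i • strip i := rfl

theorem linForm_mem_lowering {n : ℕ} (hn : ∀ i : Fin k, n ≤ k + i) (c : ℕ → ℝ) :
    linForm k c ∈ lowering (letterWeight k) n :=
  Submodule.sum_mem _ fun i _ => Submodule.smul_mem _ _
    (lowering_anti _ (hn i) (strip_mem_lowering_letterWeight i))

theorem linForm_single_self : linForm k (Pi.single k 1) = 0 := by
  rw [linForm_apply]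
  refine Finset.sum_eq_zero fun i _ => ?_
  rw [Pi.single_eq_of_ne i.2.ne, zero_smul]

theorem linForm_single_nil (c : ℕ → ℝ) : linForm k c (Finsupp.single [] 1) = 0 := by
  rw [linForm_apply, LinearMap.sum_apply]
  refine Finset.sum_eq_zero fun i _ => ?_
  rw [LinearMap.smul_apply, strip_single_eq_zero (by simp), smul_zero]

theorem mul_first_order {R : Type*} [Ring R] (g g' c c' : R) :
    g * g' - 1 - (c + c') = g - 1 - c + (g' - 1 - c') + (g - 1) * (g' - 1) := by
  noncomm_ring

theorem inv_first_order {R : Type*} [Ring R] (g : Rˣ) (c : R) :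
    (↑g⁻¹ : R) - 1 - -c = ↑g⁻¹ * ((↑g - 1) * (↑g - 1)) - (↑g - 1 - c) := by
  simp only [sub_mul, mul_sub, g.inv_mul_cancel_left, one_mul, mul_one, g.inv_mul]
  abel

theorem sub_one_mem_lowering {ι : Type*} {wt : ι → ℕ} {g c : Module.End ℝ (ι →₀ ℝ)} {n : ℕ}
    (hc : c ∈ lowering wt n) (hg : g - 1 - c ∈ lowering wt (2 * n)) : g - 1 ∈ lowering wt n := by
  convert add_mem (lowering_anti _ (by omega : n ≤ 2 * n) hg) hc using 1
  abel

theorem mul_sub_one_sub_mem_lowering {ι : Type*} {wt : ι → ℕ}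
    {g g' c c' : Module.End ℝ (ι →₀ ℝ)} {n : ℕ} (hc : c ∈ lowering wt n)
    (hg : g - 1 - c ∈ lowering wt (2 * n)) (hc' : c' ∈ lowering wt n)
    (hg' : g' - 1 - c' ∈ lowering wt (2 * n)) :
    g * g' - 1 - (c + c') ∈ lowering wt (2 * n) := by
  have h := mul_mem_lowering _ (sub_one_mem_lowering hc hg) (sub_one_mem_lowering hc' hg')
  rw [← two_mul] at h
  rw [mul_first_order g g' c c']
  exact add_mem (add_mem hg hg') h

theorem neg_mem_lowering {ι : Type*} {wt : ι → ℕ} {c : Module.End ℝ (ι →₀ ℝ)} {n : ℕ}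
    (hc : c ∈ lowering wt n) : -c ∈ lowering wt n :=
  Submodule.neg_mem (M := Module.End ℝ (ι →₀ ℝ)) _ hc

theorem inv_sub_one_sub_mem_lowering {ι : Type*} {wt : ι → ℕ}
    {g : (Module.End ℝ (ι →₀ ℝ))ˣ} {c : Module.End ℝ (ι →₀ ℝ)} {n : ℕ}
    (hinv : (↑g⁻¹ : Module.End ℝ (ι →₀ ℝ)) ∈ lowering wt 0) (hc : c ∈ lowering wt n)
    (hg : (g : Module.End ℝ (ι →₀ ℝ)) - 1 - c ∈ lowering wt (2 * n)) :
    (↑g⁻¹ : Module.End ℝ (ι →₀ ℝ)) - 1 - -c ∈ lowering wt (2 * n) := by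
  have h1 := sub_one_mem_lowering hc hg
  have h2 := mul_mem_lowering _ hinv (mul_mem_lowering _ h1 h1)
  rw [zero_add, ← two_mul] at h2
  rw [inv_first_order g c]
  exact Submodule.sub_mem (M := Module.End ℝ (ι →₀ ℝ)) _ h2 hg

/-- Operators that are the identity up to a first-order term, together with that term. -/
def firstOrderGroup (k : ℕ) : Subgroup
    ((Module.End ℝ (List (Fin k) →₀ ℝ))ˣ × Multiplicative (Module.End ℝ (List (Fin k) →₀ ℝ))) where
  carrier := {p | p.1 ∈ triangularGroup (letterWeight k) ∧
    p.2.toAdd ∈ lowering (letterWeight k) k ∧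
    (p.1 : Module.End ℝ (List (Fin k) →₀ ℝ)) - 1 - p.2.toAdd ∈ lowering (letterWeight k) (2 * k)}
  one_mem' := ⟨one_mem _, zero_mem _, by
    convert (lowering (letterWeight k) (2 * k)).zero_mem using 1
    exact (sub_zero ((1 : Module.End ℝ (List (Fin k) →₀ ℝ)) - 1)).trans (sub_self
      (1 : Module.End ℝ (List (Fin k) →₀ ℝ)))⟩
  mul_mem' := by
    rintro ⟨g, c⟩ ⟨g', c'⟩ ⟨h1, h2, h3⟩ ⟨h1', h2', h3'⟩
    refine ⟨mul_mem h1 h1', add_mem h2 h2', ?_⟩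
    exact mul_sub_one_sub_mem_lowering h2 h3 h2' h3'
  inv_mem' := by
    rintro ⟨g, c⟩ ⟨h1, h2, h3⟩
    obtain ⟨d, _, hd⟩ := inv_mem h1
    exact ⟨inv_mem h1, neg_mem_lowering h2, inv_sub_one_sub_mem_lowering hd.mem_lowering h2 h3⟩

variable (a : ℕ → ℝ)

theorem exists_unit_eq_one_add_linForm (c : ℕ → ℝ) :
    ∃ u ∈ triangularGroup (letterWeight k),
      (u : Module.End ℝ (List (Fin k) →₀ ℝ)) = 1 + linForm k c :=
  (isTriangular_of_sub_one_mem (by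
    rw [add_sub_cancel_left (1 : Module.End ℝ (List (Fin k) →₀ ℝ))]
    exact linForm_mem_lowering (fun i => by have := i.2; omega) c)).exists_unit fun _ => one_pos

theorem exists_magnus_units (α : Type*) : ∃ u : α → (Module.End ℝ (List α →₀ ℝ))ˣ,
    ∀ i, (u i : Module.End ℝ (List α →₀ ℝ)) = 1 + strip i := by
  choose u _ hu using fun i : α => (isTriangular_of_sub_one_mem (wt := List.length)
    (g := 1 + strip i) (by
      rw [add_sub_cancel_left (1 : Module.End ℝ (List α →₀ ℝ))]
      exact strip_mem_lowering _ _ _ fun w => rfl)).exists_unit fun _ => one_pos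
  exact ⟨u, hu⟩

theorem lift_injective_of_linForm {U : Fin k → (Module.End ℝ (List (Fin k) →₀ ℝ))ˣ}
    (hU : ∀ j, (U j : Module.End ℝ (List (Fin k) →₀ ℝ)) = 1 + linForm k (newtonCoord a j)) :
    Function.Injective (FreeGroup.lift U) := by
  obtain ⟨u, hu⟩ := exists_magnus_units (Fin k)
  let Φ : ℝ[X] →ₗ[ℝ] Module.End ℝ (List (Fin k) →₀ ℝ) :=
    ∑ j : Fin k, (Polynomial.lcoeff ℝ j).smulRight (strip j)
  have hΦ : ∀ p, Φ p = ∑ j : Fin k, p.coeff j • strip j := by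
    intro p
    simp [Φ, LinearMap.sum_apply]
  have hΦX : ∀ j : Fin k, Φ (X ^ (j : ℕ)) = strip j := by
    intro j
    rw [hΦ, Finset.sum_eq_single j]
    · simp
    · intro i _ hij
      rw [coeff_X_pow, if_neg (fun h => hij (Fin.ext h)), zero_smul]
    · simp
  have hlow : ∀ p, Φ p ∈ lowering List.length 1 := by
    intro p
    rw [hΦ]
    exact Submodule.sum_mem _ fun i _ => Submodule.smul_mem _ _
      (strip_mem_lowering _ _ _ fun w => rfl)
  obtain ⟨S, hS⟩ := exists_intertwiner fun i : Fin k => hlow (newtonPoly a i)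
  have hUS : ∀ j, (U j : Module.End ℝ (List (Fin k) →₀ ℝ)) * S = S * u j := by
    intro j
    have : linForm k (newtonCoord a j) * S = S * strip j := by
      rw [linForm_apply, Finset.sum_mul, ← hΦX j, ← sum_newtonCoord_smul a j.2, map_sum,
        Finset.mul_sum, ← Fin.sum_univ_eq_sum_range
          (fun i => S * Φ (newtonCoord a j i • newtonPoly a i))]
      refine Finset.sum_congr rfl fun i _ => ?_
      rw [smul_mul_assoc, strip_mul_intertwiner hS i, map_smul, mul_smul_comm]
    rw [hU, hu, add_mul, mul_add, this, one_mul, mul_one]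
  have hlift : ∀ f, (FreeGroup.lift U f : Module.End ℝ (List (Fin k) →₀ ℝ)) * S =
      S * (FreeGroup.lift u f : (Module.End ℝ (List (Fin k) →₀ ℝ))ˣ) := by
    intro f
    refine FreeGroup.induction_on f ?_ ?_ ?_ ?_
    · simp
    · intro j
      simpa using hUS j
    · intro j h
      rw [map_inv, map_inv, Units.inv_mul_eq_iff_eq_mul, ← mul_assoc, Units.eq_mul_inv_iff_mul_eq]
      exact h.symm
    · intro f g hf hg
      rw [map_mul, map_mul, Units.val_mul, Units.val_mul, mul_assoc, hg, ← mul_assoc, hf, mul_assoc]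
  rw [injective_iff_map_eq_one]
  intro f hf
  by_contra hne
  obtain ⟨m, hm⟩ := exists_lift_apply_ne hu hne
  have h1 := congrArg (fun D => D m []) (hlift f)
  simp only [hf, Units.val_one, one_mul, Module.End.mul_apply, hS, wordOperator,
    Module.End.one_apply] at h1
  exact hm h1.symm

theorem sum_newtonCoord_conjugate {E : Module.End ℝ (List (Fin k) →₀ ℝ)}
    {Z : Fin k → Module.End ℝ (List (Fin k) →₀ ℝ)}
    (hZ : ∀ i : Fin k, Z i = a i • strip i + if h : (i : ℕ) + 1 < k then strip ⟨i + 1, h⟩ else E)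
    {j : ℕ} (hj : j < k) :
    ∑ i : Fin k, newtonCoord a j i • Z i =
      linForm k (newtonCoord a (j + 1)) + if j + 1 = k then E else 0 := by
  obtain ⟨k, rfl⟩ : ∃ l, k = l + 1 := ⟨k - 1, by omega⟩
  have h1 : ∑ i : Fin (k + 1), newtonCoord a j i •
      (if h : (i : ℕ) + 1 < k + 1 then strip ⟨i + 1, h⟩ else E) =
      ∑ i : Fin k, newtonCoord a j i • strip i.succ + if j + 1 = k + 1 then E else 0 := by
    rw [Fin.sum_univ_castSucc]
    congr 1
    · refine Finset.sum_congr rfl fun i _ => ?_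
      simp [Fin.succ]
    · by_cases h : j = k
      · subst h
        simp [newtonCoord_self]
      · simp [h, newtonCoord_of_lt a (show j < k by omega)]
  have h2 : linForm (k + 1) (newtonCoord a (j + 1)) =
      ∑ i : Fin (k + 1), newtonCoord a j i • a i • strip i +
        ∑ i : Fin k, newtonCoord a j i • strip i.succ := by
    rw [linForm_apply, Fin.sum_univ_succ, Fin.sum_univ_succ (n := k)
      (f := fun i => newtonCoord a j i • a i • strip i), add_assoc, ← Finset.sum_add_distrib,
      newtonCoord_succ]
    congr 1
    · simp [newtonShift_apply_zero, smul_smul, mul_comm]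
    · refine Finset.sum_congr rfl fun i _ => ?_
      rw [Fin.val_succ, newtonShift_apply_succ, add_smul, smul_smul, mul_comm]
  rw [h2, add_assoc, ← h1, ← Finset.sum_add_distrib]
  exact Finset.sum_congr rfl fun i _ => by rw [hZ, smul_add]

/-- A tuple of perturbed letters is conjugate to the tuple of letters by a triangular operator. -/
theorem exists_triangular_conjugator (ha : ∀ i, 0 < a i)
    {Z : Fin k → Module.End ℝ (List (Fin k) →₀ ℝ)}
    (hZ : ∀ i : Fin k, Z i - a i • strip i ∈ lowering (letterWeight k) (k + i + 1)) :
    ∃ T ∈ triangularGroup (letterWeight k),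
      (∀ i, strip i * (T : Module.End ℝ (List (Fin k) →₀ ℝ)) = T * Z i) ∧
      ∀ m, (T : Module.End ℝ (List (Fin k) →₀ ℝ)) m [] = 2 * m [] := by
  have hlow : ∀ i, Z i ∈ lowering (letterWeight k) 1 := by
    intro i
    have := add_mem (lowering_anti _ (by omega : 1 ≤ k + i + 1) (hZ i))
      (Submodule.smul_mem _ (a i) (lowering_anti _ (by have := i.2; omega : 1 ≤ k + (i : ℕ))
        (strip_mem_lowering_letterWeight i)))
    convert this using 1
    abel
  obtain ⟨S, hS⟩ := exists_intertwiner hlow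
  let c : List (Fin k) → ℝ := fun w => (w.map fun i => a i).prod
  have hc : ∀ w, 0 < c w := fun w => List.prod_pos (by simp [ha])
  have hword : ∀ v m, (∀ w, letterWeight k v < letterWeight k w → m w = 0) →
      wordOperator Z v m [] = c v * m v := by
    intro v
    induction v with
    | nil =>
      intro m _
      simp [wordOperator, c]
    | cons i v ih =>
      intro m hm
      have hZm : ∀ w, letterWeight k v ≤ letterWeight k w → Z i m w = a i * m (i :: w) := by
        intro w hw
        have := hZ i (letterWeight k (i :: v) + 1) m (fun u hu => hm u hu) w (by
          rw [letterWeight_cons]; omega)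
        simpa [sub_eq_zero] using this
      rw [wordOperator, Module.End.mul_apply, ih, hZm v le_rfl]
      · simp [c]
        ring
      · intro w hw
        rw [hZm w hw.le, hm _ (by simpa only [letterWeight_cons, add_lt_add_iff_right] using hw),
          mul_zero]
  have htri : IsTriangular (letterWeight k) (fun v => 2 * c v) ((2 : ℝ) • S) := by
    intro v m hm
    rw [LinearMap.smul_apply, Finsupp.smul_apply, hS, hword v m hm, smul_eq_mul, mul_assoc]
  obtain ⟨T, hT, hTS⟩ := htri.exists_unit fun v => mul_pos two_pos (hc v)
  refine ⟨T, hT, fun i => ?_, fun m => ?_⟩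
  · rw [hTS, mul_smul_comm, strip_mul_intertwiner hS, smul_mul_assoc]
  · rw [hTS, LinearMap.smul_apply, Finsupp.smul_apply, hS, smul_eq_mul]
    rfl

theorem neg_add_neg_of_eq_zero {M : Type*} [AddCommGroup M] {x y z : M} (h : x + (y + z) = 0) :
    -x + -z = y := by
  rw [eq_neg_of_add_eq_zero_left h]
  abel

theorem exists_recursion_units (ha : ∀ i, 0 < a i) {n : ℕ} (m : Fin n → ℤ) (d : Fin n → ℕ)
    {i₀ : Fin n} (hi₀ : d i₀ = k) (hm : m i₀ = 1) (hlt : ∀ i, i ≠ i₀ → d i < k)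
    (hrel : ∑ i, (m i : ℝ) • newtonCoord a (d i) = Pi.single k 1) :
    ∃ (U : ℕ → (Module.End ℝ (List (Fin k) →₀ ℝ))ˣ) (T : (Module.End ℝ (List (Fin k) →₀ ℝ))ˣ),
      (∀ j, U j ∈ triangularGroup (letterWeight k)) ∧ T ∈ triangularGroup (letterWeight k) ∧
      (∀ j < k, U j * T = T * U (j + 1)) ∧
      ((List.finRange n).map fun i => U (d i) ^ m i).prod = 1 ∧
      Function.Injective (FreeGroup.lift fun j : Fin k => U j) ∧
      (∀ x, (T : Module.End ℝ (List (Fin k) →₀ ℝ)) x [] = 2 * x []) ∧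
      ∀ j : Fin k, (U j : Module.End ℝ (List (Fin k) →₀ ℝ)) (Finsupp.single [] 1) =
        Finsupp.single [] 1 := by
  choose V hVtri hV using fun j : ℕ => exists_unit_eq_one_add_linForm (k := k) (newtonCoord a j)
  obtain ⟨l₁, l₂, hl⟩ := List.append_of_mem (List.mem_finRange i₀)
  have hnodup := List.nodup_finRange n
  rw [hl, List.nodup_middle, List.nodup_cons, List.mem_append, not_or] at hnodup
  have hlt₁ : ∀ i ∈ l₁, d i < k := fun i hi => hlt i (by rintro rfl; exact hnodup.1.1 hi)
  have hlt₂ : ∀ i ∈ l₂, d i < k := fun i hi => hlt i (by rintro rfl; exact hnodup.1.2 hi)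
  let q : ℕ → (Module.End ℝ (List (Fin k) →₀ ℝ))ˣ ×
      Multiplicative (Module.End ℝ (List (Fin k) →₀ ℝ)) :=
    fun j => (V j, Multiplicative.ofAdd (linForm k (newtonCoord a j)))
  have hq : ∀ j, q j ∈ firstOrderGroup k := fun j =>
    ⟨hVtri j, linForm_mem_lowering (fun i => by omega) _, by
      convert (lowering (letterWeight k) (2 * k)).zero_mem using 1
      change (V j : Module.End ℝ (List (Fin k) →₀ ℝ)) - 1 - linForm k (newtonCoord a j) = 0
      rw [hV]
      abel⟩
  have hqprod : ∀ l : List (Fin n), (l.map fun i => q (d i) ^ m i).prod ∈ firstOrderGroup k :=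
    fun l => Subgroup.list_prod_mem _ fun x hx => by
      obtain ⟨i, _, rfl⟩ := List.mem_map.1 hx
      exact zpow_mem (hq _) _
  set r := ((l₁.map fun i => q (d i) ^ m i).prod)⁻¹ * ((l₂.map fun i => q (d i) ^ m i).prod)⁻¹
    with hr
  obtain ⟨hr₁, -, hr₂⟩ : r ∈ firstOrderGroup k := mul_mem (inv_mem (hqprod _)) (inv_mem (hqprod _))
  have hsnd : ∀ l : List (Fin n), (l.map fun i => q (d i) ^ m i).prod.2.toAdd =
      (l.map fun i => linForm k ((m i : ℝ) • newtonCoord a (d i))).sum := by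
    intro l
    induction l with
    | nil => rfl
    | cons i l ih =>
      rw [List.map_cons, List.prod_cons, Prod.snd_mul, toAdd_mul, ih, List.map_cons, List.sum_cons]
      congr 1
      rw [map_smul]
      exact (Int.cast_smul_eq_zsmul ℝ (m i) (linForm k (newtonCoord a (d i)))).symm
  have hfst : ∀ l : List (Fin n), (l.map fun i => q (d i) ^ m i).prod.1 =
      (l.map fun i => V (d i) ^ m i).prod := by
    intro l
    induction l with
    | nil => rfl
    | cons i l ih =>
      rw [List.map_cons, List.prod_cons, Prod.fst_mul, ih, List.map_cons, List.prod_cons]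
      rfl
  have hrsnd : r.2.toAdd = linForm k (newtonCoord a k) := by
    have h := congrArg (linForm k) hrel
    rw [map_sum, linForm_single_self, Fin.sum_univ_def, hl, List.map_append, List.sum_append,
      List.map_cons, List.sum_cons, hm, hi₀, Int.cast_one, one_smul, ← hsnd, ← hsnd] at h
    exact neg_add_neg_of_eq_zero (M := Module.End ℝ (List (Fin k) →₀ ℝ)) h
  let U : ℕ → (Module.End ℝ (List (Fin k) →₀ ℝ))ˣ := fun j => if j < k then V j else r.1
  have hUlt : ∀ j < k, U j = V j := fun j hj => if_pos hj
  have hUk : U k = r.1 := if_neg (lt_irrefl k)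
  set E : Module.End ℝ (List (Fin k) →₀ ℝ) := r.1 - 1 - linForm k (newtonCoord a k) with hE
  have hElow : E ∈ lowering (letterWeight k) (2 * k) := by
    rw [hE, ← hrsnd]
    exact hr₂
  have hUE : ∀ j ≤ k, (U j : Module.End ℝ (List (Fin k) →₀ ℝ)) =
      1 + (linForm k (newtonCoord a j) + if j = k then E else 0) := by
    intro j hj
    split_ifs with h
    · subst h
      rw [hUk, hE]
      abel
    · rw [hUlt j (by omega), hV, add_zero]
  obtain ⟨T, hT, hstrip, hTnil⟩ := exists_triangular_conjugator a ha (Z := fun i : Fin k =>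
    a i • strip i + if h : (i : ℕ) + 1 < k then strip ⟨i + 1, h⟩ else E) (by
    intro i
    rw [add_sub_cancel_left (a i • strip i)]
    split_ifs with h
    · exact add_assoc k (i : ℕ) 1 ▸ strip_mem_lowering_letterWeight ⟨i + 1, h⟩
    · exact lowering_anti _ (by omega) hElow)
  refine ⟨U, T, fun j => ?_, hT, fun j hj => ?_, ?_, ?_, hTnil, fun j => ?_⟩
  · by_cases hj : j < k
    · exact hUlt j hj ▸ hVtri j
    · have hUj : U j = r.1 := if_neg hj
      rwa [hUj]
  · ext1
    rw [Units.val_mul, Units.val_mul, hUE j hj.le, hUE (j + 1) hj, if_neg hj.ne, add_zero,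
      ← sum_newtonCoord_conjugate a (fun i => rfl) hj, add_mul, mul_add, one_mul, mul_one,
      linForm_apply, Finset.sum_mul, Finset.mul_sum]
    congr 1
    exact Finset.sum_congr rfl fun i _ => by rw [smul_mul_assoc, hstrip, mul_smul_comm]
  · have hmap : ∀ l : List (Fin n), (∀ i ∈ l, d i < k) →
        (l.map fun i => U (d i) ^ m i) = l.map fun i => V (d i) ^ m i := fun l h =>
      List.map_congr_left fun i hi => by rw [hUlt _ (h i hi)]
    rw [hl, List.map_append, List.prod_append, List.map_cons, List.prod_cons, hm, hi₀, hUk,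
      hmap l₁ hlt₁, hmap l₂ hlt₂, hr, Prod.fst_mul, Prod.fst_inv, Prod.fst_inv, hfst, hfst]
    group
  · refine lift_injective_of_linForm a fun j => ?_
    rw [hUlt _ j.2, hV]
  · rw [hUlt _ j.2, hV, LinearMap.add_apply, linForm_single_nil, add_zero, Module.End.one_apply]

end Representation

section Roots

variable {n : ℕ} {m : Fin n → ℤ} {d : Fin n → ℕ} {i₀ : Fin n}

theorem natDegree_sum_C_mul_X_pow_le (hlt : ∀ i, i ≠ i₀ → d i < d i₀) :
    (∑ i, C (m i) * X ^ d i).natDegree ≤ d i₀ :=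
  natDegree_sum_le_of_forall_le _ _ fun i _ => (natDegree_C_mul_X_pow_le _ _).trans <| by
    by_cases h : i = i₀
    · rw [h]
    · exact (hlt i h).le

theorem coeff_sum_C_mul_X_pow (hlt : ∀ i, i ≠ i₀ → d i < d i₀) :
    (∑ i, C (m i) * X ^ d i).coeff (d i₀) = m i₀ := by
  rw [finsetSum_coeff, Finset.sum_eq_single i₀]
  · simp
  · intro i _ h
    rw [coeff_C_mul_X_pow, if_neg (hlt i h).ne']
  · simp

theorem exists_map_eq_newtonPoly {p : ℤ[X]} (hp : p.Monic)
    (hroots : ∀ z : ℂ, aeval z p = 0 → z.im = 0 ∧ 0 < z.re) :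
    ∃ a : ℕ → ℝ, (∀ i, 0 < a i) ∧ p.map (Int.castRingHom ℝ) = newtonPoly a p.natDegree := by
  set q : ℂ[X] := p.map (Int.castRingHom ℂ) with hq
  have hqm : q.Monic := hp.map _
  have hsplit := (IsAlgClosed.splits q).eq_prod_roots_of_monic hqm
  set L := q.roots.toList with hL
  have hlen : L.length = p.natDegree := by
    rw [hL, Multiset.length_toList, ← (IsAlgClosed.splits q).natDegree_eq_card_roots, hq,
      hp.natDegree_map]
  have hmem : ∀ z ∈ L, z.im = 0 ∧ 0 < z.re := by
    intro z hz
    rw [hL, Multiset.mem_toList, mem_roots hqm.ne_zero, IsRoot.def, hq, eval_map,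
      ← algebraMap_int_eq, ← aeval_def] at hz
    exact hroots z hz
  refine ⟨fun i => if h : i < L.length then L[i].re else 1, fun i => ?_, ?_⟩
  · dsimp only
    split_ifs with h
    · exact (hmem _ (List.getElem_mem h)).2
    · exact one_pos
  · apply map_injective Complex.ofRealHom Complex.ofReal_injective
    rw [Polynomial.map_map, show Complex.ofRealHom.comp (Int.castRingHom ℝ) = Int.castRingHom ℂ
      from RingHom.ext_int _ _, ← hq, hsplit, ← hlen, newtonPoly, Polynomial.map_prod,
      ← Fin.prod_univ_eq_prod_range (fun i => Polynomial.map Complex.ofRealHom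
        (X - C (if h : i < L.length then L[i].re else 1))), ← Multiset.coe_toList q.roots, ← hL,
      Multiset.map_coe, Multiset.prod_coe, ← List.prod_ofFn]
    congr 1
    refine List.ext_getElem (by simp) fun i h1 h2 => ?_
    have hi : i < L.length := by simpa using h1
    have hre : ((L[i].re : ℝ) : ℂ) = L[i] :=
      Complex.ext rfl (hmem _ (List.getElem_mem hi)).1.symm
    simp [hre]

end Roots

section Group

variable {G : Type*} [Group G]

theorem conj_zpow_mul (t x : G) (z m : ℤ) :
    t ^ (-z) * x ^ m * t ^ z = (t ^ (-z) * x * t ^ z) ^ m := by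
  have := conj_zpow (i := m) (a := t ^ (-z)) (b := x)
  rw [zpow_neg, inv_inv] at this
  rw [zpow_neg, this]

theorem conj_eq_of_recursion {U : ℕ → G} {t : G} {k : ℕ} (h : ∀ j < k, U j * t = t * U (j + 1))
    (e : ℤ) {j : ℕ} (hj : j ≤ k) :
    t ^ (-(e + j)) * (t ^ e * U 0 * t ^ (-e)) * t ^ (e + j) = U j := by
  induction j with
  | zero =>
    simp only [Nat.cast_zero, add_zero]
    group
  | succ j ih =>
    rw [← inv_mul_eq_iff_eq_mul.2 (h j hj), ← ih (by omega), Nat.cast_succ]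
    group

theorem mem_of_prod_finRange_eq_one {H : Subgroup G} {n : ℕ} {y : Fin n → G} {i₀ : Fin n}
    (hprod : ((List.finRange n).map y).prod = 1) (hy : ∀ i, i ≠ i₀ → y i ∈ H) : y i₀ ∈ H := by
  obtain ⟨l₁, l₂, hl⟩ := List.append_of_mem (List.mem_finRange i₀)
  have hnodup := List.nodup_finRange n
  rw [hl, List.nodup_middle, List.nodup_cons, List.mem_append, not_or] at hnodup
  have hmem : ∀ l : List (Fin n), i₀ ∉ l → (l.map y).prod ∈ H := fun l h =>
    Subgroup.list_prod_mem _ fun g hg => by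
      obtain ⟨i, hi, rfl⟩ := List.mem_map.1 hg
      exact hy i (by rintro rfl; exact h hi)
  rw [hl, List.map_append, List.prod_append, List.map_cons, List.prod_cons] at hprod
  rw [← H.mul_mem_cancel_right (hmem l₂ hnodup.1.2),
    ← H.mul_mem_cancel_left (hmem l₁ hnodup.1.1), hprod]
  exact H.one_mem

theorem conj_pow_mem {H : Subgroup G} {t : G} (ht : ∀ h ∈ H, t⁻¹ * h * t ∈ H) (n : ℕ) :
    ∀ h ∈ H, (t ^ n)⁻¹ * h * t ^ n ∈ H := by
  induction n with
  | zero => simp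
  | succ n ih =>
    intro h hh
    convert ht _ (ih h hh) using 1
    group

/-- The elements `t ^ a * h * t ^ (-b)` with `h` in a subgroup mapped into itself by conjugation
by `t⁻¹`. -/
def ascendingSubgroup (H : Subgroup G) (t : G) (ht : ∀ h ∈ H, t⁻¹ * h * t ∈ H) : Subgroup G where
  carrier := {g | ∃ a b : ℕ, ∃ h ∈ H, g = t ^ a * h * (t ^ b)⁻¹}
  one_mem' := ⟨0, 0, 1, one_mem _, by simp⟩
  mul_mem' := by
    rintro _ _ ⟨a, b, h, hh, rfl⟩ ⟨a', b', h', hh', rfl⟩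
    refine ⟨a + a', b + b', _, mul_mem (conj_pow_mem ht a' h hh) (conj_pow_mem ht b h' hh'), ?_⟩
    group
  inv_mem' := by
    rintro _ ⟨a, b, h, hh, rfl⟩
    exact ⟨b, a, h⁻¹, inv_mem hh, by group⟩

theorem ascendingSubgroup_eq_top {x t : G} (hgen : Subgroup.closure {x, t} = ⊤) {e : ℤ} {k : ℕ}
    {H : Subgroup G} (hH : H = Subgroup.closure
      (Set.range fun j : Fin k => t ^ (-(e + (j : ℕ))) * x * t ^ (e + (j : ℕ))))
    (hk : t ^ (-(e + (k : ℕ))) * x * t ^ (e + (k : ℕ)) ∈ H) :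
    ∃ ht, ascendingSubgroup H t ht = ⊤ := by
  have hmem : ∀ j ≤ k, t ^ (-(e + (j : ℕ))) * x * t ^ (e + (j : ℕ)) ∈ H := by
    intro j hj
    rcases hj.lt_or_eq with h | rfl
    · rw [hH]
      exact Subgroup.subset_closure ⟨⟨j, h⟩, rfl⟩
    · exact hk
  have ht : ∀ h ∈ H, t⁻¹ * h * t ∈ H := by
    suffices H ≤ H.comap (MulAut.conj t⁻¹).toMonoidHom by
      intro h hh
      simpa using this hh
    conv_lhs => rw [hH]
    rw [Subgroup.closure_le]
    rintro _ ⟨j, rfl⟩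
    have := hmem (j + 1) j.2
    rw [SetLike.mem_coe, Subgroup.mem_comap]
    convert this using 1
    simp only [MulEquiv.coe_toMonoidHom, MulAut.conj_apply, Nat.cast_succ]
    group
  refine ⟨ht, top_unique ?_⟩
  have htS : t ∈ ascendingSubgroup H t ht := ⟨1, 0, 1, one_mem _, by simp⟩
  rw [← hgen, Subgroup.closure_le]
  rintro g (rfl | rfl)
  · have h0 : t ^ (-(e + (0 : ℕ))) * g * t ^ (e + (0 : ℕ)) ∈ ascendingSubgroup H t ht :=
      ⟨0, 0, _, hmem 0 (Nat.zero_le k), by simp⟩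
    rw [SetLike.mem_coe]
    convert mul_mem (mul_mem (zpow_mem htS e) h0) (zpow_mem htS (-e)) using 1
    simp only [Nat.cast_zero, add_zero]
    group
  · exact htS

end Group

theorem pow_apply_nil {α : Type*} {T : (Module.End ℝ (List α →₀ ℝ))ˣ}
    (hT : ∀ x, (T : Module.End ℝ (List α →₀ ℝ)) x [] = 2 * x []) (n : ℕ) (x : List α →₀ ℝ) :
    (↑(T ^ n) : Module.End ℝ (List α →₀ ℝ)) x [] = 2 ^ n * x [] := by
  induction n with
  | zero => simp
  | succ n ih =>
    rw [pow_succ', Units.val_mul, Module.End.mul_apply, hT, ih]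
    ring

theorem lift_apply_single_nil {α β : Type*} {U : β → (Module.End ℝ (List α →₀ ℝ))ˣ}
    (hU : ∀ j, (U j : Module.End ℝ (List α →₀ ℝ)) (Finsupp.single [] 1) = Finsupp.single [] 1)
    (f : FreeGroup β) :
    (FreeGroup.lift U f : Module.End ℝ (List α →₀ ℝ)) (Finsupp.single [] 1) =
      Finsupp.single [] 1 := by
  refine FreeGroup.induction_on f (by simp) (by simpa using hU) (fun j h => ?_)
    fun f g hf hg => ?_
  · rw [FreeGroup.lift_apply_of] at h
    rw [map_inv, FreeGroup.lift_apply_of]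
    conv_lhs => rw [← h]
    rw [← Module.End.mul_apply, Units.inv_mul, Module.End.one_apply]
  · rw [map_mul, Units.val_mul, Module.End.mul_apply, hg, hf]

theorem injective_of_recursion {G α : Type*} [Group G] {k : ℕ} {t : G} {y : Fin k → G}
    {ht : ∀ h ∈ (FreeGroup.lift y).range, t⁻¹ * h * t ∈ (FreeGroup.lift y).range}
    (htop : ascendingSubgroup (FreeGroup.lift y).range t ht = ⊤)
    (ρ : G →* (Module.End ℝ (List α →₀ ℝ))ˣ)
    (hT : ∀ x, (ρ t : Module.End ℝ (List α →₀ ℝ)) x [] = 2 * x [])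
    (hU : ∀ j, (ρ (y j) : Module.End ℝ (List α →₀ ℝ)) (Finsupp.single [] 1) = Finsupp.single [] 1)
    (hinj : Function.Injective (FreeGroup.lift fun j => ρ (y j))) : Function.Injective ρ := by
  rw [injective_iff_map_eq_one]
  intro g hg
  obtain ⟨a, b, _, ⟨f, rfl⟩, rfl⟩ := htop.ge (Subgroup.mem_top g)
  have hlift : ρ (FreeGroup.lift y f) = FreeGroup.lift (fun j => ρ (y j)) f :=
    DFunLike.congr_fun (FreeGroup.ext_hom (ρ.comp (FreeGroup.lift y))
      (FreeGroup.lift fun j => ρ (y j)) (by simp)) f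
  rw [map_mul, map_inv, mul_inv_eq_one, map_mul, map_pow, map_pow, hlift] at hg
  have h := congrArg (fun u : (Module.End ℝ (List α →₀ ℝ))ˣ =>
    (u : Module.End ℝ (List α →₀ ℝ)) (Finsupp.single [] 1) []) hg
  simp only [Units.val_mul, Module.End.mul_apply] at h
  rw [lift_apply_single_nil hU, pow_apply_nil hT, pow_apply_nil hT, Finsupp.single_eq_same,
    mul_one, mul_one] at h
  obtain rfl : a = b := pow_right_injective₀ two_pos (by norm_num) h
  rw [mul_eq_left, map_eq_one_iff _ hinj] at hg
  rw [hg]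
  simp

theorem isBiOrderable_of_representation {G : Type*} [Group G] {x t : G}
    (hgen : Subgroup.closure {x, t} = ⊤) {e : ℤ} {y : ℕ → G}
    (hy : ∀ j : ℕ, y j = t ^ (-(e + j)) * x * t ^ (e + j)) {n : ℕ} {m : Fin n → ℤ}
    {d : Fin n → ℕ} {i₀ : Fin n} (hprod : ((List.finRange n).map fun i => y (d i) ^ m i).prod = 1)
    (hm : m i₀ = 1) (hlt : ∀ i, i ≠ i₀ → d i < d i₀) {wt : List (Fin (d i₀)) → ℕ}
    (ρ : G →* (Module.End ℝ (List (Fin (d i₀)) →₀ ℝ))ˣ) (hx : ρ x ∈ triangularGroup wt)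
    (ht : ρ t ∈ triangularGroup wt)
    (hT : ∀ v, (ρ t : Module.End ℝ (List (Fin (d i₀)) →₀ ℝ)) v [] = 2 * v [])
    (hU : ∀ j : Fin (d i₀), (ρ (y j) : Module.End ℝ (List (Fin (d i₀)) →₀ ℝ))
      (Finsupp.single [] 1) = Finsupp.single [] 1)
    (hinj : Function.Injective (FreeGroup.lift fun j : Fin (d i₀) => ρ (y j))) :
    IsBiOrderable G := by
  have hyk : y (d i₀) ∈ (FreeGroup.lift fun j : Fin (d i₀) => y j).range := by
    have hlow : ∀ i, i ≠ i₀ → y (d i) ∈ (FreeGroup.lift fun j : Fin (d i₀) => y j).range :=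
      fun i hi => ⟨FreeGroup.of ⟨d i, hlt i hi⟩, FreeGroup.lift_apply_of⟩
    have := mem_of_prod_finRange_eq_one hprod fun i hi => zpow_mem (hlow i hi) (m i)
    rwa [hm, zpow_one] at this
  obtain ⟨ht', htop⟩ := ascendingSubgroup_eq_top hgen (e := e) (k := d i₀)
    (H := (FreeGroup.lift fun j : Fin (d i₀) => y j).range)
    (by rw [FreeGroup.range_lift_eq_closure, funext fun j : Fin (d i₀) => hy j])
    (by rwa [← hy])
  refine isBiOrderable_of_triangular ρ (injective_of_recursion htop ρ hT hU hinj) (wt := wt)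
    fun g => ?_
  suffices (triangularGroup wt).comap ρ = ⊤ from this.ge (Subgroup.mem_top g)
  rw [← top_le_iff, ← hgen, Subgroup.closure_le]
  rintro g (rfl | rfl)
  · exact hx
  · exact ht

theorem biorderable_of_monic_positive_real_roots
    (n : ℕ) (hn : 1 ≤ n) (m d : Fin n → ℤ)
    (e D : ℤ)
    (he : IsLeast (Set.range d) e) (hD : IsGreatest (Set.range d) D)
    (htidyE : (∑ i ∈ Finset.univ.filter fun i => d i = e, m i) ≠ 0)
    (htidyD : (∑ i ∈ Finset.univ.filter fun i => d i = D, m i) ≠ 0)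
    (hprincipal : ∃! i : Fin n, d i = D)
    (hmonic : ∀ i : Fin n, d i = D → m i = 1)
    (hroots : ∀ z : ℂ,
      Polynomial.aeval z
        (∑ i : Fin n, Polynomial.C (m i) * Polynomial.X ^ (d i - e).toNat) = 0 →
      z.im = 0 ∧ 0 < z.re) :
    IsBiOrderable (PresentedGroup
      ({((List.finRange n).map fun i =>
          (FreeGroup.of false) ^ (-(d i)) * (FreeGroup.of true) ^ (m i) *
            (FreeGroup.of false) ^ (d i)).prod} : Set (FreeGroup Bool))) := by
  obtain ⟨i₀, hi₀, huniq⟩ := hprincipal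
  set δ : Fin n → ℕ := fun i => (d i - e).toNat with hδ
  have hd : ∀ i, d i = e + δ i := fun i => by
    have := he.2 ⟨i, rfl⟩
    simp only [hδ]
    omega
  have hlt : ∀ i, i ≠ i₀ → δ i < δ i₀ := fun i hi => by
    have h1 := hD.2 ⟨i, rfl⟩
    have h2 : d i ≠ D := fun h => hi (huniq i h)
    have h3 := hd i
    have h4 := hd i₀
    omega
  have hm : m i₀ = 1 := hmonic i₀ hi₀
  have hcoeff := coeff_sum_C_mul_X_pow (m := m) hlt
  have hdeg := natDegree_eq_of_le_of_coeff_ne_zero (natDegree_sum_C_mul_X_pow_le (m := m) hlt)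
    (by rw [hcoeff, hm]; exact one_ne_zero)
  obtain ⟨a, ha, hpoly⟩ := exists_map_eq_newtonPoly
    (monic_of_natDegree_le_of_coeff_eq_one _ (natDegree_sum_C_mul_X_pow_le hlt)
      (hcoeff.trans hm)) hroots
  rw [hdeg] at hpoly
  have hrel : ∑ i, (m i : ℝ) • newtonCoord a (δ i) = Pi.single (δ i₀) 1 := by
    rw [← aeval_newtonPoly a, ← hpoly]
    simp [Polynomial.map_sum, newtonCoord, Algebra.smul_def]
  obtain ⟨U, T, hUtri, hTtri, hUT, hprod, hinj, hTnil, hUnil⟩ :=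
    exists_recursion_units a ha m δ rfl hm hlt hrel
  set rels : Set (FreeGroup Bool) := {((List.finRange n).map fun i =>
    (FreeGroup.of false) ^ (-(d i)) * (FreeGroup.of true) ^ (m i) *
      (FreeGroup.of false) ^ (d i)).prod} with hrels
  have hle : ∀ i, δ i ≤ δ i₀ := fun i => by
    by_cases h : i = i₀
    · rw [h]
    · exact (hlt i h).le
  let gens : Bool → (Module.End ℝ (List (Fin (δ i₀)) →₀ ℝ))ˣ :=
    fun b => if b then T ^ e * U 0 * T ^ (-e) else T
  have hgens : ∀ r ∈ rels, FreeGroup.lift gens r = 1 := by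
    rintro _ rfl
    rw [map_list_prod, List.map_map, ← hprod]
    congr 1
    refine List.map_congr_left fun i _ => ?_
    simp only [Function.comp_apply, map_mul, map_zpow, FreeGroup.lift_apply_of]
    rw [conj_zpow_mul, hd i]
    exact congrArg (· ^ m i) (conj_eq_of_recursion hUT e (hle i))
  let x : PresentedGroup rels := PresentedGroup.of true
  let t : PresentedGroup rels := PresentedGroup.of false
  let y : ℕ → PresentedGroup rels := fun j => t ^ (-(e + j)) * x * t ^ (e + j)
  let ρ := PresentedGroup.toGroup hgens
  have hρx : ρ x = T ^ e * U 0 * T ^ (-e) := PresentedGroup.toGroup.of hgens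
  have hρt : ρ t = T := PresentedGroup.toGroup.of hgens
  have hρy : ∀ j ≤ δ i₀, ρ (y j) = U j := fun j hj => by
    rw [map_mul, map_mul, map_zpow, map_zpow, hρx, hρt, conj_eq_of_recursion hUT e hj]
  have hgen : Subgroup.closure {x, t} = ⊤ := by
    rw [← PresentedGroup.closure_range_of rels]
    congr 1
    ext g
    simp [x, t, or_comm]
  have hyprod : ((List.finRange n).map fun i => y (δ i) ^ m i).prod = 1 := by
    have := PresentedGroup.one_of_mem (rels := rels) rfl
    rw [map_list_prod, List.map_map] at this
    rw [← this]
    congr 1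
    refine List.map_congr_left fun i _ => ?_
    simp only [Function.comp_apply, map_mul, map_zpow]
    rw [conj_zpow_mul, hd i]
    rfl
  refine isBiOrderable_of_representation hgen (fun _ => rfl) hyprod hm hlt
    (wt := letterWeight (δ i₀)) ρ ?_ (by rwa [hρt]) (by rwa [hρt]) (fun j => ?_) ?_
  · rw [hρx]
    exact mul_mem (mul_mem (zpow_mem hTtri _) (hUtri 0)) (zpow_mem hTtri _)
  · rw [hρy j j.2.le]
    exact hUnil j
  · rwa [funext fun j : Fin (δ i₀) => hρy j j.2.le]
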